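/- Let $m \ge 1$ and $1 \le p \le m$ be integers, let $h_1 \ge h_2 \ge \dots \ge h_m \ge 0$ be reals, and write $M=\{1,\dots,m\}$. The mixing set with a cardinality constraint is $$F_c^= = \Big\{(z,x) \in \mathbb{R}_{\ge 0}\times\{0,1\}^m : \ x_i = 0 \Rightarrow z \ge h_i \ (i\in M),\ \sum_{i=1}^m x_i \le p\Big\}.$$ Its bilinear lifting $S_c^=$ is the set of all $(z,x;y)$ with $z \ge 0$, $x\in[0,1]^m$, $\sum_{i=1}^m x_i\le p$, $y \in \mathbb{Z}_{\ge 0}^m$, $\sum_{i=1}^m y_i \le 1$ such that $(1-x_i)(1-\sum_{j=1}^m y_j) = 0$, $(z-h_i)\,y_i \ge 0$ and $x_i y_i \le 0$ for all $i\in M$, and $(1-x_i)\,y_j \le 0$ for all $i<j$ in $M$. Let $r \in \{1,\dots,p\}$, $l \in \{1,\dots,r\}$ and $v \in \{1,\dots,p-r\}$, and set $s_\iota = p-r-v+\iota$ for $\iota = 1,\dots,v+1$. Let $1 \le t_1 < \dots < t_l \le r$, with the convention $t_{l+1} := r+s_1$. Let $\delta_{t_\iota} \in \mathbb{R}$, $\iota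 = 1,\dots,l$, satisfy: $\delta_{t_\iota} \ge h_{t_{\iota+1}} - h_{t_\iota}$ for every $\iota = 1,\dots,l$; $\sum_{\iota=1}^{k-1} \delta_{t_\iota} \ge 0$ for every $k = 2,\dots,l+1$; and $\sum_{\iota=1}^{l} \delta_{t_\iota} \le h_{r+s_1} - h_{r+s_2}$. Let $q_1,\dots,q_v$ be distinct indices with $r+s_\iota+1 \le q_\iota \le m$ for every $\iota = 1,\dots,v$. Define $\phi_{q_1} = h_{r+s_1} - h_{r+s_2} - \sum_{k=1}^{l} \delta_{t_k}$ and, for $\iota = 2,\dots,v$, $$\phi_{q_\iota} = \max\Big\{ \phi_{q_{\iota-1}},\ h_{r+s_1} - h_{r+s_\iota+1} - \sum_{k=1}^{l} \delta_{t_k} - \sum_{\substack{1\le k\le \iota-1\\ q_k \ge r+s_\iota+1}} \phi_{q_k} \Big\}.$$ Then the BL&P inequality $$z + \sum_{\iota=1}^{l} (h_{t_\iota} - h_{t_{\iota+1}} + \delta_{t_\iota})\, x_{t_\iota} + \sum_{\iota=1}^{v} \phi_{q_\iota} (1 - x_{q_\iota}) \ge h_{t_1}$$ holds for every $(z,x)$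 in the projection of $\operatorname{conv}(S_c^=)$ onto the $(z,x)$-space, and for every $(z,x) \in \operatorname{conv}(F_c^=)$. -/

import Mathlib

/-- The mixing set with a cardinality constraint `F_c^=`: pairs `(z, x)` with `z ≥ 0`, `x` a
binary vector indexed by `{1, …, m}`, `x_i = 0 → z ≥ h_i` for every `i`, and `∑ x_i ≤ p`. -/
def mixingSetCard (m p : ℕ) (h : ℕ → ℝ) : Set (ℝ × (Set.Icc 1 m → ℝ)) :=
  {w | 0 ≤ w.1 ∧ (∀ i, w.2 i = 0 ∨ w.2 i = 1) ∧ (∀ i, w.2 i = 0 → h i ≤ w.1) ∧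
    ∑ i, w.2 i ≤ (p : ℝ)}

/-- The bilinear set `S_c^=` of all `((z, x), y)` with `z ≥ 0`, `x ∈ [0,1]^m`, `∑ x_i ≤ p`,
`y` a nonnegative integer vector with `∑ y_i ≤ 1`, subject to the five families of bilinear
constraints. -/
def bilinearSetCard (m p : ℕ) (h : ℕ → ℝ) :
    Set ((ℝ × (Set.Icc 1 m → ℝ)) × (Set.Icc 1 m → ℝ)) :=
  {w | 0 ≤ w.1.1 ∧ (∀ i, 0 ≤ w.1.2 i) ∧ (∀ i, w.1.2 i ≤ 1) ∧ ∑ i, w.1.2 i ≤ (p : ℝ) ∧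
    (∀ i, ∃ n : ℕ, w.2 i = (n : ℝ)) ∧ ∑ i, w.2 i ≤ 1 ∧
    (∀ i, 0 ≤ (1 - w.1.2 i) * (1 - ∑ j, w.2 j)) ∧
    (∀ i, 0 ≤ -((1 - w.1.2 i) * (1 - ∑ j, w.2 j))) ∧
    (∀ i, 0 ≤ w.1.1 * w.2 i - h i * w.2 i) ∧
    (∀ i, 0 ≤ -(w.1.2 i * w.2 i)) ∧
    (∀ i j, i < j → 0 ≤ -((1 - w.1.2 i) * w.2 j))}

/-- `s_ι = p - r - v + ι` (used only when `r + v ≤ p`). -/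
def blpS (p r v ι : ℕ) : ℕ := p - r - v + ι

/-- The coefficients `φ_{q_ι}`, as a function of `ι = 1, …, v`, given by the recursion
`φ_{q_1} = h_{r+s_1} - h_{r+s_2} - ∑_{k=1}^l δ_k` and, for `ι ≥ 2`,
`φ_{q_ι} = max {φ_{q_{ι-1}}, h_{r+s_1} - h_{r+s_ι+1} - ∑_{k=1}^l δ_k - ∑ φ_{q_k}}`, the last sum
over the `k ∈ {1, …, ι-1}` with `q_k ≥ r+s_ι+1`. The value at `ι = 0` is a dummy. -/
noncomputable def blpPhi (p r l v : ℕ) (h δ : ℕ → ℝ) (q : ℕ → ℕ) : ℕ → ℝ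
  | 0 => 0
  | 1 => h (r + blpS p r v 1) - h (r + blpS p r v 2) - ∑ k ∈ Finset.Icc 1 l, δ k
  | ι + 2 =>
    max (blpPhi p r l v h δ q (ι + 1))
      (h (r + blpS p r v 1) - h (r + blpS p r v (ι + 2) + 1) - ∑ k ∈ Finset.Icc 1 l, δ k
        - ∑ k : Fin (ι + 1),
            if r + blpS p r v (ι + 2) + 1 ≤ q (k + 1) then
              blpPhi p r l v h δ q (k + 1) else 0)

/-- The point `w = (z, x)` satisfies
`z + ∑_{ι=1}^l (h_{t_ι} - h_{t_{ι+1}} + δ_ι) x_{t_ι} + ∑_{ι=1}^v φ_ι (1 - x_{q_ι}) ≥ h_{t_1}`. -/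
def BLPInequality {m : ℕ} (l v : ℕ) (h : ℕ → ℝ) (t q : ℕ → Set.Icc 1 m) (δ φ : ℕ → ℝ)
    (w : ℝ × (Set.Icc 1 m → ℝ)) : Prop :=
  w.1 + ∑ ι ∈ Finset.Icc 1 l, (h (t ι) - h (t (ι + 1)) + δ ι) * w.2 (t ι)
    + ∑ ι ∈ Finset.Icc 1 v, φ ι * (1 - w.2 (q ι)) ≥ h (t 1)

/-!
Since `p < q_v ≤ m`, not all coordinates of `x` are `1`, and in either set there is then an index
`j` with `z ≥ h_j` such that `x_i = 1` for all `i < j`. The terms of such a point with `t_ι < j`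
telescope. If `j ≤ t_{K+1}` for a first `K`, this already gives the inequality. Otherwise the
`t`-terms fall short by at most `h_{r+s_1} - h_j - ∑ δ` with `j = r + s_ι + 1` for some `ι`. Only
`p - (j - 1) = v - ι` units of the capacity are left for the indices `q_k ≥ j`, and because `φ` is
nondecreasing the `φ`-terms are smallest when these units go to `q_{ι+1}, …, q_v`. The terms that
remain have the sum that the recursion for `φ_{q_ι}` bounds from below.
-/

open Finset

lemma sum_Icc_sub_succ_add {G : Type*} [AddCommGroup G] (g δ : ℕ → G) (K : ℕ) :
    ∑ ι ∈ Icc 1 K, (g ι - g (ι + 1) + δ ι) = g 1 - g (K + 1) + ∑ ι ∈ Icc 1 K, δ ι := by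
  have htelescope : ∑ ι ∈ Icc 1 K, (g (ι + 1) - g ι) = g (K + 1) - g 1 := by
    rw [← Ico_add_one_right_eq_Icc, sum_Ico_sub g (Nat.le_add_left 1 K)]
  rw [sum_add_distrib, ← neg_sub (g (K + 1)), ← htelescope, ← sum_neg_distrib]
  simp only [neg_sub]

section OrderedSums

variable {R : Type*} [CommRing R] [LinearOrder R] [IsStrictOrderedRing R]

lemma sub_succ_add_sum_le_sum_mul {K l : ℕ} (hK : K ≤ l) {g δ u : ℕ → R}
    (hδ : ∀ ι ∈ Icc 1 l, g (ι + 1) - g ι ≤ δ ι) (hu0 : ∀ ι ∈ Icc 1 l, 0 ≤ u ι)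
    (hu1 : ∀ ι ∈ Icc 1 K, u ι = 1) :
    g 1 - g (K + 1) + ∑ ι ∈ Icc 1 K, δ ι ≤
      ∑ ι ∈ Icc 1 l, (g ι - g (ι + 1) + δ ι) * u ι :=
  calc
    _ = ∑ ι ∈ Icc 1 K, (g ι - g (ι + 1) + δ ι) * u ι := by
      rw [← sum_Icc_sub_succ_add]
      exact sum_congr rfl fun ι hι => by rw [hu1 ι hι, mul_one]
    _ ≤ _ := sum_le_sum_of_subset_of_nonneg (Icc_subset_Icc_right hK) fun ι hι _ =>
      mul_nonneg (by linarith [hδ ι hι]) (hu0 ι hι)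

/-- A bathtub principle: with total weight at most `#B`, it is cheapest to put weight `1` on each
element of `B`, where the coefficients are largest. -/
lemma sum_le_sum_union_mul_one_sub {κ : Type*} [DecidableEq κ] {A B : Finset κ}
    (hAB : Disjoint A B) {φ u : κ → R} {c : R} (hc : 0 ≤ c) (hA : ∀ k ∈ A, φ k ≤ c)
    (hB : ∀ k ∈ B, c ≤ φ k) (hu0 : ∀ k ∈ A, 0 ≤ u k) (hu1 : ∀ k ∈ B, u k ≤ 1)
    (hsum : ∑ k ∈ A ∪ B, u k ≤ #B) :
    ∑ k ∈ A, φ k ≤ ∑ k ∈ A ∪ B, φ k * (1 - u k) := by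
  have hsumA : ∑ k ∈ A, φ k - c * ∑ k ∈ A, u k ≤ ∑ k ∈ A, φ k * (1 - u k) := by
    rw [mul_sum, ← sum_sub_distrib]
    exact sum_le_sum fun k hk => by linarith [mul_le_mul_of_nonneg_right (hA k hk) (hu0 k hk)]
  have hsumB : c * (#B - ∑ k ∈ B, u k) ≤ ∑ k ∈ B, φ k * (1 - u k) := by
    rw [← nsmul_one, ← sum_const, ← sum_sub_distrib, mul_sum]
    exact sum_le_sum fun k hk => mul_le_mul_of_nonneg_right (hB k hk) (sub_nonneg.mpr (hu1 k hk))
  rw [sum_union hAB] at hsum ⊢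
  linarith [mul_nonneg hc (sub_nonneg.mpr hsum)]

lemma exists_lt_one_of_sum_lt_card {κ : Type*} [Fintype κ] {u : κ → R}
    (hu : ∑ k, u k < Fintype.card κ) : ∃ k, u k < 1 := by
  have hlt : ∑ k, u k < ∑ _k : κ, (1 : R) := by simpa using hu
  simpa using exists_lt_of_sum_lt hlt

end OrderedSums

section OnesBefore

variable {α : Type*} [Fintype α] [LinearOrder α] {c : ℝ} {w : ℝ × (α → ℝ)} {h : α → ℝ} {j : α}

/-- The common shape of the points `w = (z, x)` of the mixing set and of its bilinear lifting:
`x ∈ [0,1]^α` has total at most the capacity `c`, all its coordinates before `j` are `1`, and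
`z ≥ h_j`. Coordinates from `j` on may be fractional. -/
structure HasOnesBefore (c : ℝ) (w : ℝ × (α → ℝ)) (h : α → ℝ) (j : α) : Prop where
  nonneg : ∀ i, 0 ≤ w.2 i
  le_one : ∀ i, w.2 i ≤ 1
  sum_le : ∑ i, w.2 i ≤ c
  eq_one_of_lt : ∀ i < j, w.2 i = 1
  le_fst : h j ≤ w.1

lemma HasOnesBefore.sum_comp_add_card_le (hw : HasOnesBefore c w h j) {κ : Type*} {T : Finset κ}
    {q : κ → α} (hq : Set.InjOn q T) (hT : ∀ k ∈ T, j ≤ q k) :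
    ∑ k ∈ T, w.2 (q k) + #{i | i < j} ≤ c := by
  have hdisj : Disjoint (T.image q) ({i | i < j} : Finset α) := by
    simpa only [disjoint_left, forall_mem_image, mem_filter_univ, not_lt] using hT
  have hones : ∑ i with i < j, w.2 i = #{i | i < j} := by
    rw [sum_congr rfl fun i hi => hw.eq_one_of_lt i (mem_filter_univ i |>.mp hi), sum_const,
      nsmul_one]
  rw [← hones, ← sum_image hq, ← sum_union hdisj]
  exact (sum_le_univ_sum_of_nonneg hw.nonneg).trans hw.sum_le

lemma HasOnesBefore.card_le (hw : HasOnesBefore c w h j) : (#{i | i < j} : ℝ) ≤ c := by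
  simpa using hw.sum_comp_add_card_le (T := ∅) (q := id) (by simp) (by simp)

end OnesBefore

lemma card_filter_lt_add_one {m : ℕ} (j : Set.Icc 1 m) : #{i | i < j} + 1 = (j : ℕ) := by
  have hIco : ({i | i < j} : Finset (Set.Icc 1 m)) = (Ico 1 (j : ℕ)).subtype (· ∈ Set.Icc 1 m) := by
    ext i
    simpa using fun _ => i.2.1
  have hmem : ∀ i ∈ Ico 1 (j : ℕ), i ∈ Set.Icc 1 m := fun i hi =>
    ⟨(mem_Ico.mp hi).1, (mem_Ico.mp hi).2.le.trans j.2.2⟩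
  rw [hIco, card_subtype, filter_true_of_mem hmem, Nat.card_Ico, Nat.sub_add_cancel j.2.1]

section Sets

variable {m p : ℕ} {h : ℕ → ℝ}

lemma exists_hasOnesBefore_of_mem_mixingSetCard (hpm : p < m) {w : ℝ × (Set.Icc 1 m → ℝ)}
    (hw : w ∈ mixingSetCard m p h) : ∃ j, HasOnesBefore p w (fun i => h i) j := by
  obtain ⟨-, hbin, hz, hsum⟩ := hw
  have hlt : ∃ i, w.2 i < 1 :=
    exists_lt_one_of_sum_lt_card (hsum.trans_lt (by simpa using hpm))
  obtain ⟨j, hj⟩ := exists_minimal_of_wellFoundedLT _ hlt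
  have hone_of_not_lt : ∀ i, ¬ w.2 i < 1 → w.2 i = 1 := fun i hi =>
    (hbin i).resolve_left fun h0 => hi (h0 ▸ one_pos)
  exact ⟨j, fun i => by rcases hbin i with h0 | h1 <;> simp [*],
    fun i => by rcases hbin i with h0 | h1 <;> simp [*], hsum,
    fun i hij => hone_of_not_lt i (hj.not_prop_of_lt hij),
    hz j ((hbin j).resolve_right hj.prop.ne)⟩

lemma exists_hasOnesBefore_of_mem_bilinearSetCard (hpm : p < m)
    {w : (ℝ × (Set.Icc 1 m → ℝ)) × (Set.Icc 1 m → ℝ)} (hw : w ∈ bilinearSetCard m p h) :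
    ∃ j, HasOnesBefore p w.1 (fun i => h i) j := by
  obtain ⟨-, hx0, hx1, hsum, hint, -, hge, hle, hz, -, hbefore⟩ := hw
  obtain ⟨i, hi⟩ := exists_lt_one_of_sum_lt_card (hsum.trans_lt (by simpa using hpm))
  have hysum : ∑ j, w.2 j = 1 := by
    have hprod : (1 - w.1.2 i) * (1 - ∑ j, w.2 j) = 0 := by linarith [hge i, hle i]
    linarith [(mul_eq_zero.mp hprod).resolve_left (sub_pos.mpr hi).ne']
  obtain ⟨j, -, hj⟩ := exists_ne_zero_of_sum_ne_zero (hysum.trans_ne one_ne_zero)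
  have hjpos : 0 < w.2 j := by
    obtain ⟨n, hn⟩ := hint j
    exact (hn ▸ n.cast_nonneg).lt_of_ne' hj
  refine ⟨j, hx0, hx1, hsum, fun i hij => (hx1 i).antisymm ?_, ?_⟩
  · exact sub_nonpos.mp (nonpos_of_mul_nonpos_left (neg_nonneg.mp (hbefore i j hij)) hjpos)
  · exact le_of_mul_le_mul_right (sub_nonneg.mp (hz j)) hjpos

end Sets

section Phi

variable {p r l v : ℕ} {h δ : ℕ → ℝ} {q : ℕ → ℕ}

lemma add_blpS_add (hvp : r + v ≤ p) (ι : ℕ) : r + blpS p r v ι + v = p + ι := by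
  unfold blpS
  omega

lemma blpPhi_add_two (n : ℕ) :
    blpPhi p r l v h δ q (n + 2) =
      max (blpPhi p r l v h δ q (n + 1))
        (h (r + blpS p r v 1) - h (r + blpS p r v (n + 2) + 1) - ∑ k ∈ Icc 1 l, δ k
          - ∑ k ∈ Icc 1 (n + 1) with r + blpS p r v (n + 2) + 1 ≤ q k,
              blpPhi p r l v h δ q k) := by
  rw [blpPhi, sum_filter, ← Ico_add_one_right_eq_Icc 1 (n + 1), sum_Ico_eq_sum_range,
    add_tsub_cancel_right, sum_range]
  simp only [add_comm 1]

lemma monotoneOn_blpPhi : MonotoneOn (blpPhi p r l v h δ q) (Set.Ici 1) := by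
  refine monotoneOn_of_le_add_one Set.ordConnected_Ici fun k _ hk _ => ?_
  obtain ⟨n, rfl⟩ := Nat.exists_eq_add_of_le' hk
  exact (le_max_left _ _).trans_eq (blpPhi_add_two n).symm

lemma blpPhi_nonneg
    (hδub : ∑ ι ∈ Icc 1 l, δ ι ≤ h (r + blpS p r v 1) - h (r + blpS p r v 2))
    {k : ℕ} (hk : 1 ≤ k) : 0 ≤ blpPhi p r l v h δ q k := by
  refine le_trans ?_ (monotoneOn_blpPhi Set.self_mem_Ici hk hk)
  rw [blpPhi]
  linarith

lemma le_sum_blpPhi {ι : ℕ} (hι : 1 ≤ ι) (hq : r + blpS p r v ι + 1 ≤ q ι) :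
    h (r + blpS p r v 1) - h (r + blpS p r v ι + 1) - ∑ k ∈ Icc 1 l, δ k ≤
      ∑ k ∈ Icc 1 ι with r + blpS p r v ι + 1 ≤ q k, blpPhi p r l v h δ q k := by
  obtain ⟨n, rfl⟩ := Nat.exists_eq_add_of_le' hι
  rw [sum_filter, sum_Icc_succ_top hι, if_pos hq, ← sum_filter]
  cases n with
  | zero => simp [blpPhi, blpS, add_assoc]
  | succ n =>
    rw [← sub_le_iff_le_add', blpPhi_add_two]
    exact le_max_right _ _

end Phi

section Inequality

variable {m l v : ℕ} {h : ℕ → ℝ} {t q : ℕ → Set.Icc 1 m} {δ φ : ℕ → ℝ}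
  {w : ℝ × (Set.Icc 1 m → ℝ)} {j : Set.Icc 1 m}

lemma convex_setOf_BLPInequality : Convex ℝ {w | BLPInequality l v h t q δ φ w} := by
  have hlinear : IsLinearMap ℝ fun w : ℝ × (Set.Icc 1 m → ℝ) =>
      w.1 + ∑ ι ∈ Icc 1 l, (h (t ι) - h (t (ι + 1)) + δ ι) * w.2 (t ι)
        - ∑ ι ∈ Icc 1 v, φ ι * w.2 (q ι) :=
    { map_add := fun w w' => by
        simp only [Prod.fst_add, Prod.snd_add, Pi.add_apply, mul_add, sum_add_distrib]
        ring
      map_smul := fun a w => by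
        simp only [Prod.smul_fst, Prod.smul_snd, Pi.smul_apply, smul_eq_mul, mul_sub, mul_add,
          mul_sum, mul_left_comm a] }
  have hiff : ∀ w, BLPInequality l v h t q δ φ w ↔ h (t 1) - ∑ ι ∈ Icc 1 v, φ ι ≤
      w.1 + ∑ ι ∈ Icc 1 l, (h (t ι) - h (t (ι + 1)) + δ ι) * w.2 (t ι)
        - ∑ ι ∈ Icc 1 v, φ ι * w.2 (q ι) := by
    intro w
    simp only [BLPInequality, mul_sub, mul_one, sum_sub_distrib, ge_iff_le]
    constructor <;> intro hw <;> linarith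
  simpa only [hiff] using convex_halfSpace_ge hlinear (h (t 1) - ∑ ι ∈ Icc 1 v, φ ι)

lemma HasOnesBefore.blpInequality_of_prefix {c : ℝ} (hw : HasOnesBefore c w (fun i => h i) j)
    {K : ℕ} (hK : K ≤ l) (ht : ∀ ι ∈ Icc 1 K, t ι < j)
    (hδlb : ∀ ι ∈ Icc 1 l, δ ι ≥ h (t (ι + 1)) - h (t ι))
    (hgap : h (t (K + 1)) ≤
      h j + ∑ ι ∈ Icc 1 K, δ ι + ∑ ι ∈ Icc 1 v, φ ι * (1 - w.2 (q ι))) :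
    BLPInequality l v h t q δ φ w := by
  have hprefix := sub_succ_add_sum_le_sum_mul hK (g := fun ι => h (t ι)) (u := fun ι => w.2 (t ι))
    hδlb (fun ι _ => hw.nonneg _) fun ι hι => hw.eq_one_of_lt _ (ht ι hι)
  unfold BLPInequality
  linarith [hw.le_fst]

variable {p r : ℕ}

lemma HasOnesBefore.exists_blpS_add_one_eq (hw : HasOnesBefore p w (fun i => h i) j)
    (hvp : r + v ≤ p) (hj : r + blpS p r v 1 < (j : ℕ)) :
    ∃ ι ∈ Icc 1 v, r + blpS p r v ι + 1 = (j : ℕ) := by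
  have hjp : (j : ℕ) ≤ p + 1 := by
    rw [← card_filter_lt_add_one j]
    exact Nat.succ_le_succ (by exact_mod_cast hw.card_le)
  have hs1 := add_blpS_add hvp 1
  have hsι := add_blpS_add hvp (j + v - (p + 1))
  exact ⟨j + v - (p + 1), mem_Icc.mpr (by omega), by omega⟩

lemma HasOnesBefore.sum_filter_blpPhi_le (hw : HasOnesBefore p w (fun i => h i) j)
    (hvp : r + v ≤ p)
    (hδub : ∑ ι ∈ Icc 1 l, δ ι ≤ h (r + blpS p r v 1) - h (r + blpS p r v 2))
    (hqinj : Set.InjOn q (Set.Icc 1 v))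
    (hqlb : ∀ ι ∈ Icc 1 v, r + blpS p r v ι + 1 ≤ (q ι : ℕ))
    {ι : ℕ} (hι : ι ∈ Icc 1 v) (hjι : r + blpS p r v ι + 1 = (j : ℕ)) :
    ∑ k ∈ Icc 1 ι with j ≤ q k, blpPhi p r l v h δ (fun ι => (q ι : ℕ)) k ≤
      ∑ k ∈ Icc 1 v, blpPhi p r l v h δ (fun ι => (q ι : ℕ)) k * (1 - w.2 (q k)) := by
  obtain ⟨hι1, hιv⟩ := mem_Icc.mp hι
  set A := {k ∈ Icc 1 ι | j ≤ q k}
  have hAι : ∀ k ∈ A, 1 ≤ k ∧ k ≤ ι := fun k hk => mem_Icc.mp (mem_filter.mp hk).1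
  have hAB : Disjoint A (Ioc ι v) := disjoint_left.mpr fun k hkA hkB =>
    (mem_Ioc.mp hkB).1.not_ge (hAι k hkA).2
  have hsub : A ∪ Ioc ι v ⊆ Icc 1 v := union_subset
    ((filter_subset _ _).trans (Icc_subset_Icc_right hιv))
    fun k hk => mem_Icc.mpr ⟨hι1.trans (mem_Ioc.mp hk).1.le, (mem_Ioc.mp hk).2⟩
  have hjq : ∀ k ∈ A ∪ Ioc ι v, j ≤ q k := by
    intro k hk
    rcases mem_union.mp hk with hkA | hkB
    · exact (mem_filter.mp hkA).2
    · have hqk := hqlb k (hsub hk)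
      rw [← Subtype.coe_le_coe]
      linarith [add_blpS_add hvp k, add_blpS_add hvp ι, (mem_Ioc.mp hkB).1]
  have hcapacity : ∑ k ∈ A ∪ Ioc ι v, w.2 (q k) ≤ #(Ioc ι v) := by
    have hle := hw.sum_comp_add_card_le (hqinj.mono fun k hk => mem_Icc.mp (hsub hk)) hjq
    have hcard : p = #(Ioc ι v) + #{i | i < j} := by
      have hjcard := card_filter_lt_add_one j
      have hsι := add_blpS_add hvp ι
      rw [Nat.card_Ioc]
      omega
    rw [hcard, Nat.cast_add] at hle
    exact le_of_add_le_add_right hle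
  refine (sum_le_sum_union_mul_one_sub hAB (blpPhi_nonneg hδub hι1)
    (fun k hk => monotoneOn_blpPhi (hAι k hk).1 hι1 (hAι k hk).2)
    (fun k hk => monotoneOn_blpPhi hι1 (hι1.trans (mem_Ioc.mp hk).1.le) (mem_Ioc.mp hk).1.le)
    (fun k _ => hw.nonneg _) (fun k _ => hw.le_one _) hcapacity).trans ?_
  exact sum_le_sum_of_subset_of_nonneg hsub fun k hk _ =>
    mul_nonneg (blpPhi_nonneg hδub (mem_Icc.mp hk).1) (sub_nonneg.mpr (hw.le_one _))

lemma HasOnesBefore.le_sum_blpPhi_mul (hw : HasOnesBefore p w (fun i => h i) j)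
    (hvp : r + v ≤ p) (hj : r + blpS p r v 1 < (j : ℕ))
    (hδub : ∑ ι ∈ Icc 1 l, δ ι ≤ h (r + blpS p r v 1) - h (r + blpS p r v 2))
    (hqinj : Set.InjOn q (Set.Icc 1 v))
    (hqlb : ∀ ι ∈ Icc 1 v, r + blpS p r v ι + 1 ≤ (q ι : ℕ)) :
    h (r + blpS p r v 1) - h j - ∑ k ∈ Icc 1 l, δ k ≤
      ∑ k ∈ Icc 1 v, blpPhi p r l v h δ (fun ι => (q ι : ℕ)) k * (1 - w.2 (q k)) := by
  obtain ⟨ι, hι, hjι⟩ := hw.exists_blpS_add_one_eq hvp hj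
  refine le_trans ?_ (hw.sum_filter_blpPhi_le hvp hδub hqinj hqlb hι hjι)
  simpa only [hjι, Subtype.coe_le_coe] using
    le_sum_blpPhi (q := fun ι => (q ι : ℕ)) (mem_Icc.mp hι).1 (hqlb ι hι)

lemma HasOnesBefore.blpInequality (hw : HasOnesBefore p w (fun i => h i) j)
    (hmono : AntitoneOn h (Set.Icc 1 m)) (hvp : r + v ≤ p)
    (httop : (t (l + 1) : ℕ) = r + blpS p r v 1)
    (hδlb : ∀ ι ∈ Icc 1 l, δ ι ≥ h (t (ι + 1)) - h (t ι))
    (hδpartial : ∀ k ∈ Icc 1 l, ∑ ι ∈ Icc 1 k, δ ι ≥ 0)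
    (hδub : ∑ ι ∈ Icc 1 l, δ ι ≤ h (r + blpS p r v 1) - h (r + blpS p r v 2))
    (hqinj : Set.InjOn q (Set.Icc 1 v))
    (hqlb : ∀ ι ∈ Icc 1 v, r + blpS p r v ι + 1 ≤ (q ι : ℕ)) :
    BLPInequality l v h t q δ (blpPhi p r l v h δ (fun ι => (q ι : ℕ))) w := by
  by_cases hreach : ∃ K, K ≤ l ∧ j ≤ t (K + 1)
  · obtain ⟨K, hmin⟩ := exists_minimal_of_wellFoundedLT _ hreach
    obtain ⟨hK, hjt⟩ := hmin.prop
    have hbefore : ∀ ι ∈ Icc 1 K, t ι < j := by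
      intro ι hι
      obtain ⟨n, rfl⟩ := Nat.exists_eq_add_of_le' (mem_Icc.mp hι).1
      have hnK : n < K := (mem_Icc.mp hι).2
      exact not_le.mp fun hle => hmin.not_prop_of_lt hnK ⟨hnK.le.trans hK, hle⟩
    have hδK : 0 ≤ ∑ ι ∈ Icc 1 K, δ ι := by
      rcases K.eq_zero_or_pos with rfl | hpos
      · simp
      · exact hδpartial K (mem_Icc.mpr ⟨hpos, hK⟩)
    have hφ : 0 ≤ ∑ ι ∈ Icc 1 v,
        blpPhi p r l v h δ (fun ι => (q ι : ℕ)) ι * (1 - w.2 (q ι)) :=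
      sum_nonneg fun k hk =>
        mul_nonneg (blpPhi_nonneg hδub (mem_Icc.mp hk).1) (sub_nonneg.mpr (hw.le_one _))
    exact hw.blpInequality_of_prefix hK hbefore hδlb
      (by linarith [hmono j.2 (t (K + 1)).2 hjt])
  · push Not at hreach
    refine hw.blpInequality_of_prefix le_rfl (fun ι hι => ?_) hδlb ?_
    · obtain ⟨n, rfl⟩ := Nat.exists_eq_add_of_le' (mem_Icc.mp hι).1
      exact hreach n (Nat.le_of_succ_le (mem_Icc.mp hι).2)
    · have hj : r + blpS p r v 1 < (j : ℕ) := httop ▸ hreach l le_rfl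
      rw [httop]
      linarith [hw.le_sum_blpPhi_mul hvp hj hδub hqinj hqlb]

end Inequality

theorem blp_inequality_valid_cardinality_general
    (m p : ℕ) (h : ℕ → ℝ) (hmono : AntitoneOn h (Set.Icc 1 m))
    (r l v : ℕ) (hv1 : 1 ≤ v) (hvp : r + v ≤ p)
    (t : ℕ → Set.Icc 1 m) (httop : (t (l + 1) : ℕ) = r + blpS p r v 1)
    (δ : ℕ → ℝ)
    (hδlb : ∀ ι ∈ Icc 1 l, δ ι ≥ h (t (ι + 1)) - h (t ι))
    (hδpartial : ∀ k ∈ Icc 1 l, ∑ ι ∈ Icc 1 k, δ ι ≥ 0)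
    (hδub : ∑ ι ∈ Icc 1 l, δ ι ≤ h (r + blpS p r v 1) - h (r + blpS p r v 2))
    (q : ℕ → Set.Icc 1 m) (hqinj : Set.InjOn q (Set.Icc 1 v))
    (hqlb : ∀ ι ∈ Icc 1 v, r + blpS p r v ι + 1 ≤ (q ι : ℕ)) :
    (∀ w ∈ Prod.fst '' convexHull ℝ (bilinearSetCard m p h),
      BLPInequality l v h t q δ (blpPhi p r l v h δ (fun ι => (q ι : ℕ))) w) ∧
    (∀ w ∈ convexHull ℝ (mixingSetCard m p h),
      BLPInequality l v h t q δ (blpPhi p r l v h δ (fun ι => (q ι : ℕ))) w) := by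
  have hpm : p < m :=
    calc
      p < r + blpS p r v v + 1 := by linarith [add_blpS_add hvp v]
      _ ≤ q v := hqlb v (right_mem_Icc.mpr hv1)
      _ ≤ m := (q v).2.2
  have hvalid : ∀ w : ℝ × (Set.Icc 1 m → ℝ), (∃ j, HasOnesBefore p w (fun i => h i) j) →
      BLPInequality l v h t q δ (blpPhi p r l v h δ (fun ι => (q ι : ℕ))) w :=
    fun w ⟨_, hw⟩ => hw.blpInequality hmono hvp httop hδlb hδpartial hδub hqinj hqlb
  constructor
  · rintro _ ⟨u, hu, rfl⟩
    exact convexHull_min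
      (fun u hu => hvalid u.1 (exists_hasOnesBefore_of_mem_bilinearSetCard hpm hu))
      (convex_setOf_BLPInequality.linear_preimage (LinearMap.fst ℝ _ _)) hu
  · exact convexHull_min
      (fun w hw => hvalid w (exists_hasOnesBefore_of_mem_mixingSetCard hpm hw))
      convex_setOf_BLPInequality

/-- Validity of the BL&P inequalities for the mixing set with a cardinality constraint.
`δ ι` and `blpPhi … ι` stand for `δ_{t_ι}` and `φ_{q_ι}`; of `t`, `δ`, `q` only the values at
`1, …, l + 1`, at `1, …, l` and at `1, …, v` matter. -/
theorem blp_inequality_valid_cardinality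
    (m p : ℕ) (hp1 : 1 ≤ p) (hpm : p ≤ m)
    (h : ℕ → ℝ)
    (hmono : AntitoneOn h (Set.Icc 1 m))
    (hnonneg : ∀ i ∈ Set.Icc 1 m, 0 ≤ h i)
    (r l v : ℕ) (hr1 : 1 ≤ r) (hrp : r ≤ p) (hl1 : 1 ≤ l) (hlr : l ≤ r)
    (hv1 : 1 ≤ v) (hvp : r + v ≤ p)
    (t : ℕ → Set.Icc 1 m)
    (htmono : StrictMonoOn t (Set.Icc 1 l))
    (htr : ∀ ι ∈ Finset.Icc 1 l, (t ι : ℕ) ≤ r)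
    (httop : (t (l + 1) : ℕ) = r + blpS p r v 1)
    (δ : ℕ → ℝ)
    (hδlb : ∀ ι ∈ Finset.Icc 1 l, δ ι ≥ h (t (ι + 1)) - h (t ι))
    (hδpartial : ∀ k ∈ Finset.Icc 1 l, ∑ ι ∈ Finset.Icc 1 k, δ ι ≥ 0)
    (hδub : ∑ ι ∈ Finset.Icc 1 l, δ ι ≤ h (r + blpS p r v 1) - h (r + blpS p r v 2))
    (q : ℕ → Set.Icc 1 m)
    (hqinj : Set.InjOn q (Set.Icc 1 v))
    (hqlb : ∀ ι ∈ Finset.Icc 1 v, r + blpS p r v ι + 1 ≤ (q ι : ℕ)) :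
    (∀ w ∈ Prod.fst '' convexHull ℝ (bilinearSetCard m p h),
      BLPInequality l v h t q δ (blpPhi p r l v h δ (fun ι => (q ι : ℕ))) w) ∧
    (∀ w ∈ convexHull ℝ (mixingSetCard m p h),
      BLPInequality l v h t q δ (blpPhi p r l v h δ (fun ι => (q ι : ℕ))) w) :=
  blp_inequality_valid_cardinality_general m p h hmono r l v hv1 hvp t httop δ hδlb hδpartial hδub
    q hqinj hqlb
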